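/- Let H be a finite-dimensional complex inner product space, N ∈ ℕ, let X_1,…,X_N be pairwise commuting binary observables on H, let Z_1,…,Z_N be pairwise commuting binary observables on H, and let {1,…,N} = R ⊔ S be a partition. Fix ψ ∈ H and let Φ be the extracted global vector. Then for every u ∈ {0,1}^N supported on R and every v ∈ {0,1}^N supported on S: ⟨Φ, (Id_H ⊗ Id_{Q_N} ⊗ Π^σx_u Π^σz_v) Φ⟩ = 2^{−|R|} · Σ_{u' supported on R} ⟨ψ, Π^Z_v Z(u') Π^X_{u⊕u'} Z(u') Π^Z_v ψ⟩. (Equivalently, the probability of obtaining outcomes (u,v) when measuring the Pauli observables σx,i for i ∈ R and σz,i for i ∈ S on the reduced state of Φ on the third register equals the right-hand side.) -/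

import Mathlib

open scoped Matrix Kronecker ComplexConjugate

noncomputable section

/-- Bit vectors of length `N`, i.e. elements of `{0,1}^N`. -/
abbrev BV (N : ℕ) := Fin N → Bool

/-- The space `Q_N` of functions `{0,1}^N → ℂ`. -/
abbrev QV (N : ℕ) := BV N → ℂ

/-- Linear operators on `Q_N`, represented as matrices in the standard basis. -/
abbrev QOp (N : ℕ) := Matrix (BV N) (BV N) ℂ

/-- Bitwise XOR of bit vectors. -/
def bvXor {N : ℕ} (x r : BV N) : BV N := fun i => xor (x i) (r i)

/-- The sign `(-1)^{s·x}` where `s·x = Σ_i s_i x_i mod 2`. -/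
def bSign {N : ℕ} (s x : BV N) : ℂ :=
  (-1 : ℂ) ^ (Finset.univ.filter fun i => s i = true ∧ x i = true).card

/-- The standard basis vector `e_x` of `Q_N`. -/
def eVec {N : ℕ} (x : BV N) : QV N := fun y => if y = x then 1 else 0

/-- Tensor product of two vectors (as functions). -/
def tensVec {α β : Type*} (f : α → ℂ) (g : β → ℂ) : α × β → ℂ := fun p => f p.1 * g p.2

/-- The Pauli parity operator `σx(r)`, sending `e_x` to `e_{x ⊕ r}`. -/
def sigmaX {N : ℕ} (r : BV N) : QOp N :=
  Matrix.of fun y x => if y = bvXor x r then 1 else 0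

/-- The Pauli parity operator `σz(s)`, sending `e_x` to `(-1)^{s·x} e_x`. -/
def sigmaZ {N : ℕ} (s : BV N) : QOp N :=
  Matrix.diagonal fun x => bSign s x

/-- The scalar `2^{-N/2}`. -/
def invSqrt2pow (N : ℕ) : ℂ := (((Real.sqrt 2)⁻¹ : ℝ) : ℂ) ^ N

/-- The maximally entangled state `φ⁺_N = 2^{-N/2} Σ_x e_x ⊗ e_x`. -/
def phiPlus (N : ℕ) : BV N × BV N → ℂ :=
  invSqrt2pow N • ∑ x : BV N, tensVec (eVec x) (eVec x)

/-- The standard (complex) inner product on a finite function space. -/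
def qInner {α : Type*} [Fintype α] (f g : α → ℂ) : ℂ :=
  ∑ x, (starRingEnd ℂ) (f x) * g x

/-- The norm associated to `qInner`. -/
def qNorm {α : Type*} [Fintype α] (f : α → ℂ) : ℝ :=
  Real.sqrt (qInner f f).re

/-- A binary observable: a self-adjoint operator squaring to the identity. -/
def IsBinaryObs {ι : Type*} [Fintype ι] [DecidableEq ι] (O : Matrix ι ι ℂ) : Prop :=
  O.IsHermitian ∧ O * O = 1

/-- For pairwise commuting operators `X i`, the parity product `X(r) = ∏_{i : r_i = 1} X_i`. -/
def obsProd {n : ℕ} {ι : Type*} [Fintype ι] [DecidableEq ι]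
    (X : Fin n → Matrix ι ι ℂ) (hX : ∀ i j, Commute (X i) (X j)) (r : BV n) :
    Matrix ι ι ℂ :=
  (Finset.univ.filter fun i => r i = true).noncommProd X fun i _ j _ _ => hX i j

/-- The set of bit vectors supported on `R`. -/
def suppSet {N : ℕ} (R : Finset (Fin N)) : Finset (BV N) :=
  Finset.univ.filter fun u => ∀ i, u i = true → i ∈ R

/-- The projector `Π^{σx}_u = 2^{-|R|} Σ_{u' supported on R} (-1)^{u·u'} σx(u')`. -/
def projPauliX {N : ℕ} (R : Finset (Fin N)) (u : BV N) : QOp N :=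
  ((2 : ℂ) ^ R.card)⁻¹ • ∑ u' ∈ suppSet R, bSign u u' • sigmaX u'

/-- The projector `Π^{σz}_v = 2^{-|S|} Σ_{v' supported on S} (-1)^{v·v'} σz(v')`. -/
def projPauliZ {N : ℕ} (S : Finset (Fin N)) (v : BV N) : QOp N :=
  ((2 : ℂ) ^ S.card)⁻¹ • ∑ v' ∈ suppSet S, bSign v v' • sigmaZ v'

/-- The projector `Π^X_u = 2^{-|R|} Σ_{u' supported on R} (-1)^{u·u'} X(u')`
for a family of commuting binary observables. -/
def projObs {N : ℕ} {ι : Type*} [Fintype ι] [DecidableEq ι]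
    (X : Fin N → Matrix ι ι ℂ) (hX : ∀ i j, Commute (X i) (X j))
    (R : Finset (Fin N)) (u : BV N) : Matrix ι ι ℂ :=
  ((2 : ℂ) ^ R.card)⁻¹ • ∑ u' ∈ suppSet R, bSign u u' • obsProd X hX u'

/-- The extracted global vector
`Φ = 2^{-N} Σ_{r,s} (X(r)Z(s) ⊗ σx(r)σz(s) ⊗ Id)(ψ ⊗ φ⁺_N)`. -/
def extractedVec {N : ℕ} {ι : Type*} [Fintype ι] [DecidableEq ι]
    (X Z : Fin N → Matrix ι ι ℂ)
    (hX : ∀ i j, Commute (X i) (X j)) (hZ : ∀ i j, Commute (Z i) (Z j))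
    (ψ : ι → ℂ) : ι × BV N × BV N → ℂ :=
  ((2 : ℂ) ^ N)⁻¹ • ∑ r : BV N, ∑ s : BV N,
    ((obsProd X hX r * obsProd Z hZ s) ⊗ₖ ((sigmaX r * sigmaZ s) ⊗ₖ (1 : QOp N))).mulVec
      (tensVec ψ (phiPlus N))



theorem bSign_eq_prod {N : ℕ} (s x : BV N) :
    bSign s x = ∏ i, (if s i = true ∧ x i = true then (-1 : ℂ) else 1) := by
  unfold bSign
  rw [Finset.prod_ite]; simp

theorem bSign_comm {N : ℕ} (s x : BV N) : bSign s x = bSign x s := by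
  unfold bSign
  simp only [and_comm]

theorem bSign_xor {N : ℕ} (s x y : BV N) : bSign s (bvXor x y) = bSign s x * bSign s y := by
  simp only [bSign_eq_prod, ← Finset.prod_mul_distrib]
  refine Finset.prod_congr rfl fun i _ => ?_
  have h : bvXor x y i = xor (x i) (y i) := rfl
  cases hs : s i <;> cases hx : x i <;> cases hy : y i <;> simp [h, hx, hy]

theorem bSign_conj {N : ℕ} (s x : BV N) : (starRingEnd ℂ) (bSign s x) = bSign s x := by
  simp [bSign]

theorem bSign_sum {N : ℕ} (R : Finset (Fin N)) (s : BV N) :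
    ∑ a ∈ suppSet R, bSign a s = if ∀ i ∈ R, s i = false then (2 : ℂ) ^ R.card else 0 := by
  have h1 : suppSet R = Fintype.piFinset (fun i => if i ∈ R then Finset.univ else {false}) := by
    ext a
    simp only [suppSet, Finset.mem_filter, Finset.mem_univ, true_and, Fintype.mem_piFinset]
    refine forall_congr' fun i => ?_
    by_cases h : i ∈ R <;> simp [h]
  simp only [bSign_eq_prod]
  rw [h1, ← Finset.prod_univ_sum _ (fun i b => if b = true ∧ s i = true then (-1 : ℂ) else 1)]
  have h2 : ∀ i, ∑ b ∈ (if i ∈ R then Finset.univ else {false}),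
      (if b = true ∧ s i = true then (-1 : ℂ) else 1)
      = if i ∈ R then (if s i = false then 2 else 0) else 1 := by
    intro i
    by_cases h : i ∈ R <;> cases hs : s i <;> simp [h]
  rw [Finset.prod_congr rfl fun i _ => h2 i, Finset.prod_ite_mem, Finset.univ_inter]
  split_ifs with h
  · rw [Finset.prod_congr rfl (fun i hi => if_pos (h i hi))]; simp
  · push Not at h
    obtain ⟨i, hi, hs⟩ := h
    exact Finset.prod_eq_zero hi (if_neg hs)

theorem chi_sum {N : ℕ} (R : Finset (Fin N)) (s : BV N) :
    ((2 : ℂ) ^ R.card)⁻¹ * ∑ a ∈ suppSet R, bSign a s = if ∀ i ∈ R, s i = false then 1 else 0 := by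
  rw [bSign_sum]
  split_ifs <;> simp

theorem bvXor_assoc {N : ℕ} (x y z : BV N) : bvXor (bvXor x y) z = bvXor x (bvXor y z) := by
  ext i; simp [bvXor]

theorem bvXor_comm {N : ℕ} (x y : BV N) : bvXor x y = bvXor y x := by
  ext i; simp [bvXor, Bool.xor_comm]

theorem bvXor_cancel {N : ℕ} (x y : BV N) : bvXor x (bvXor x y) = y := by
  ext i; simp [bvXor]

theorem bvXor_eq_iff {N : ℕ} (x y z : BV N) : x = bvXor y z ↔ z = bvXor x y := by
  constructor
  · rintro rfl; rw [bvXor_comm _ y, bvXor_cancel]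
  · rintro rfl; rw [bvXor_comm x, bvXor_cancel]

theorem suppSet_univ {N : ℕ} : suppSet (Finset.univ : Finset (Fin N)) = Finset.univ := by
  simp [suppSet]

theorem chi_univ {N : ℕ} (x y : BV N) :
    ((2 : ℂ) ^ N)⁻¹ * ∑ a : BV N, bSign a x * bSign a y = if x = y then 1 else 0 := by
  have h := chi_sum Finset.univ (bvXor x y)
  rw [suppSet_univ, Finset.card_univ, Fintype.card_fin] at h
  simp only [bSign_xor] at h
  rw [h]
  congr 1
  simp only [bvXor, Finset.mem_univ, true_imp_iff, funext_iff, eq_iff_iff]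
  refine forall_congr' fun i => ?_
  cases x i <;> cases y i <;> simp

section obs
variable {N : ℕ} {ι : Type*} [Fintype ι] [DecidableEq ι]

theorem comm_ite (X : Fin N → Matrix ι ι ℂ) (hX : ∀ i j, Commute (X i) (X j))
    (r s : BV N) (i j : Fin N) :
    Commute (if r i = true then X i else 1) (if s j = true then X j else 1) := by
  split_ifs <;> simp [hX]

theorem filter_noncommProd (X : Fin N → Matrix ι ι ℂ)
    (r : BV N) (T : Finset (Fin N))
    (h1 : ((T.filter fun i => r i = true : Finset (Fin N)) : Set (Fin N)).Pairwise
      (Function.onFun Commute X))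
    (h2 : (T : Set (Fin N)).Pairwise
      (Function.onFun Commute (fun i => if r i = true then X i else 1))) :
    (T.filter fun i => r i = true).noncommProd X h1
    = T.noncommProd (fun i => if r i = true then X i else 1) h2 := by
  induction T using Finset.induction_on with
  | empty => 
    have h0 : (∅ : Finset (Fin N)).filter (fun i => r i = true) = ∅ := Finset.filter_empty _
    rw [Finset.noncommProd_empty, Finset.noncommProd_congr h0 (fun _ _ => rfl)]
    exact Finset.noncommProd_empty _ _
  | insert a T ha ih =>
    have hsub : T.filter (fun i => r i = true) ⊆ (insert a T).filter (fun i => r i = true) :=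
      Finset.filter_subset_filter _ (Finset.subset_insert a T)
    have h1' := Set.Pairwise.mono (Finset.coe_subset.2 hsub) h1
    have h2' := Set.Pairwise.mono (Finset.coe_subset.2 (Finset.subset_insert a T)) h2
    rw [Finset.noncommProd_insert_of_notMem _ _ _ _ ha, ← ih h1' h2']
    by_cases h : r a = true
    · have : (insert a T).filter (fun i => r i = true)
        = insert a (T.filter fun i => r i = true) := by rw [Finset.filter_insert, if_pos h]
      rw [Finset.noncommProd_congr this (fun _ _ => rfl), if_pos h]
      exact Finset.noncommProd_insert_of_notMem _ _ _ _ (fun hm => ha (Finset.mem_filter.1 hm).1)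
    · have : (insert a T).filter (fun i => r i = true)
        = (T.filter fun i => r i = true) := by rw [Finset.filter_insert, if_neg h]
      rw [Finset.noncommProd_congr this (fun _ _ => rfl), if_neg h, one_mul]

theorem obsProd_eq (X : Fin N → Matrix ι ι ℂ)
    (hX : ∀ i j, Commute (X i) (X j)) (r : BV N)
    (h2 : ((Finset.univ : Finset (Fin N)) : Set (Fin N)).Pairwise
      (Function.onFun Commute (fun i => if r i = true then X i else 1))) :
    obsProd X hX r
    = Finset.univ.noncommProd (fun i => if r i = true then X i else 1) h2 :=
  filter_noncommProd X r _ _ h2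

theorem obsProd_xor (X : Fin N → Matrix ι ι ℂ) (hXobs : ∀ i, IsBinaryObs (X i))
    (hX : ∀ i j, Commute (X i) (X j)) (r s : BV N) :
    obsProd X hX (bvXor r s) = obsProd X hX r * obsProd X hX s := by
  rw [obsProd_eq X hX r (fun i _ j _ _ => comm_ite X hX r r i j),
    obsProd_eq X hX s (fun i _ j _ _ => comm_ite X hX s s i j),
    obsProd_eq X hX _ (fun i _ j _ _ => comm_ite X hX _ _ i j)]
  refine Eq.trans ?_ (Finset.noncommProd_mul_distrib (s := Finset.univ)
    (fun i => if r i = true then X i else 1) (fun i => if s i = true then X i else 1)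
    (fun i _ j _ _ => comm_ite X hX r r i j) (fun i _ j _ _ => comm_ite X hX s s i j)
    (fun i _ j _ _ => comm_ite X hX s r i j))
  refine Finset.noncommProd_congr rfl (fun i _ => ?_) _
  have h : bvXor r s i = xor (r i) (s i) := rfl
  simp only [Pi.mul_apply]
  cases hr : r i <;> cases hs : s i <;> simp [h, hr, hs, (hXobs i).2]

theorem noncommProd_herm (X : Fin N → Matrix ι ι ℂ) (hXobs : ∀ i, IsBinaryObs (X i))
    (hX : ∀ i j, Commute (X i) (X j)) (T : Finset (Fin N))
    (h : (T : Set (Fin N)).Pairwise (Function.onFun Commute X)) :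
    (T.noncommProd X h)ᴴ = T.noncommProd X h := by
  induction T using Finset.induction_on with
  | empty => rw [Finset.noncommProd_empty, Matrix.conjTranspose_one]
  | insert a T ha ih =>
    rw [Finset.noncommProd_insert_of_notMem _ _ _ _ ha, Matrix.conjTranspose_mul, ih,
      (hXobs a).1.eq]
    exact (Finset.noncommProd_commute _ _ _ _ fun i _ => hX a i).symm.eq

theorem obsProd_herm (X : Fin N → Matrix ι ι ℂ) (hXobs : ∀ i, IsBinaryObs (X i))
    (hX : ∀ i j, Commute (X i) (X j)) (r : BV N) :
    (obsProd X hX r)ᴴ = obsProd X hX r :=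
  noncommProd_herm X hXobs hX _ _

/-- Joint spectral projector. -/
def jointP (Z : Fin N → Matrix ι ι ℂ) (hZ : ∀ i j, Commute (Z i) (Z j)) (x : BV N) :
    Matrix ι ι ℂ := ((2 : ℂ) ^ N)⁻¹ • ∑ s : BV N, bSign s x • obsProd Z hZ s

theorem jointP_herm (Z : Fin N → Matrix ι ι ℂ) (hZobs : ∀ i, IsBinaryObs (Z i))
    (hZ : ∀ i j, Commute (Z i) (Z j)) (x : BV N) :
    (jointP Z hZ x)ᴴ = jointP Z hZ x := by
  unfold jointP
  rw [Matrix.conjTranspose_smul, Matrix.conjTranspose_sum]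
  simp only [Matrix.conjTranspose_smul, obsProd_herm Z hZobs hZ]
  congr 1
  · simp
  · exact Finset.sum_congr rfl fun s _ => by rw [← starRingEnd_apply, bSign_conj]

theorem obsProd_spec (Z : Fin N → Matrix ι ι ℂ)
    (hZ : ∀ i j, Commute (Z i) (Z j)) (s : BV N) :
    obsProd Z hZ s = ∑ x, bSign s x • jointP Z hZ x := by
  unfold jointP
  simp only [Finset.smul_sum, smul_smul]
  rw [Finset.sum_comm]
  have h : ∀ t : BV N, ∑ x : BV N, (bSign s x * (((2 : ℂ) ^ N)⁻¹ * bSign t x)) • obsProd Z hZ t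
      = (if s = t then (1 : ℂ) else 0) • obsProd Z hZ t := by
    intro t
    rw [← Finset.sum_smul, ← chi_univ, Finset.mul_sum]
    congr 1
    refine Finset.sum_congr rfl fun x _ => ?_
    rw [bSign_comm s, bSign_comm t]; ring
  rw [Finset.sum_congr rfl fun t _ => h t]
  simp

theorem xor_sum_comm {A : Type*} [AddCommMonoid A] (w : BV N) (f : BV N → A) :
    ∑ x, f (bvXor w x) = ∑ x, f x :=
  Finset.sum_bijective (bvXor w) (Function.Involutive.bijective (bvXor_cancel w))
    (by simp) (by simp)

theorem obsProd_mul_jointP (Z : Fin N → Matrix ι ι ℂ) (hZobs : ∀ i, IsBinaryObs (Z i))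
    (hZ : ∀ i j, Commute (Z i) (Z j)) (s x : BV N) :
    obsProd Z hZ s * jointP Z hZ x = bSign s x • jointP Z hZ x := by
  unfold jointP
  rw [Matrix.mul_smul, smul_comm (bSign s x), Finset.mul_sum]
  congr 1
  rw [Finset.smul_sum]
  rw [← xor_sum_comm s (fun t => bSign s x • bSign t x • obsProd Z hZ t)]
  refine Finset.sum_congr rfl fun t _ => ?_
  rw [obsProd_xor Z hZobs, Matrix.mul_smul, smul_smul, bSign_comm (bvXor s t), bSign_xor,
    bSign_comm x s, bSign_comm x t, ← mul_assoc]
  congr 1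
  have : bSign s x * bSign s x = 1 := by
    rw [← bSign_xor]; simp [bSign, bvXor]
  rw [this, one_mul]

/-- Indicator that `x` agrees with `v` on `S`. -/
def agree (S : Finset (Fin N)) (v x : BV N) : ℂ := if ∀ i ∈ S, bvXor v x i = false then 1 else 0

theorem agree_eq (S : Finset (Fin N)) (v x : BV N) :
    ((2 : ℂ) ^ S.card)⁻¹ * ∑ a ∈ suppSet S, bSign v a * bSign a x = agree S v x := by
  rw [agree, ← chi_sum]
  congr 1
  exact Finset.sum_congr rfl fun a _ => by rw [bSign_xor, bSign_comm v]

theorem projObs_eq (Z : Fin N → Matrix ι ι ℂ) (hZ : ∀ i j, Commute (Z i) (Z j))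
    (S : Finset (Fin N)) (v : BV N) :
    projObs Z hZ S v = ∑ x, agree S v x • jointP Z hZ x := by
  unfold projObs
  simp only [obsProd_spec Z hZ, ← agree_eq, Finset.smul_sum, Finset.mul_sum, Finset.sum_smul,
    smul_smul]
  rw [Finset.sum_comm]

theorem projPauliZ_eq (S : Finset (Fin N)) (v : BV N) :
    projPauliZ S v = Matrix.diagonal (agree S v) := by
  ext x y
  simp only [projPauliZ, Matrix.smul_apply, Matrix.sum_apply, sigmaZ, smul_eq_mul,
    Matrix.diagonal_apply]
  split_ifs with h
  · rw [← agree_eq]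
  · simp

theorem projPauliX_apply (R : Finset (Fin N)) (u x y : BV N) :
    projPauliX R u x y = ((2 : ℂ) ^ R.card)⁻¹ * ∑ w ∈ suppSet R,
      bSign u w * if x = bvXor y w then 1 else 0 := by
  simp [projPauliX, Matrix.sum_apply, sigmaX]

theorem left_proj (Z : Fin N → Matrix ι ι ℂ) (hZobs : ∀ i, IsBinaryObs (Z i))
    (hZ : ∀ i j, Commute (Z i) (Z j)) (S : Finset (Fin N)) (v s : BV N) :
    obsProd Z hZ s * projObs Z hZ S v = ∑ x, (agree S v x * bSign s x) • jointP Z hZ x := by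
  rw [projObs_eq, Finset.mul_sum]
  refine Finset.sum_congr rfl fun x _ => ?_
  rw [Matrix.mul_smul, obsProd_mul_jointP Z hZobs, smul_smul]

theorem right_proj (Z : Fin N → Matrix ι ι ℂ) (hZobs : ∀ i, IsBinaryObs (Z i))
    (hZ : ∀ i j, Commute (Z i) (Z j)) (S : Finset (Fin N)) (v s : BV N) :
    projObs Z hZ S v * obsProd Z hZ s = ∑ x, (agree S v x * bSign s x) • jointP Z hZ x := by
  have h := congrArg Matrix.conjTranspose (left_proj Z hZobs hZ S v s)
  rw [Matrix.conjTranspose_mul, obsProd_herm Z hZobs, Matrix.conjTranspose_sum] at h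
  have h2 : (projObs Z hZ S v)ᴴ = projObs Z hZ S v := by
    rw [projObs_eq, Matrix.conjTranspose_sum]
    refine Finset.sum_congr rfl fun x _ => ?_
    rw [Matrix.conjTranspose_smul, jointP_herm Z hZobs]
    congr 1
    unfold agree
    split_ifs <;> simp
  rw [h2] at h
  rw [h]
  refine Finset.sum_congr rfl fun x _ => ?_
  rw [Matrix.conjTranspose_smul, jointP_herm Z hZobs]
  congr 1
  rw [← starRingEnd_apply, map_mul, bSign_conj]
  congr 1
  unfold agree
  split_ifs <;> simp

theorem agree_key (R S : Finset (Fin N)) (hRS : Disjoint R S) (hRScover : R ∪ S = Finset.univ)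
    (v x y w : BV N) (hw : w ∈ suppSet R) :
    agree S v y * agree S v x * agree R (bvXor y x) w
      = agree S v x * if y = bvXor x w then 1 else 0 := by
  have hw' : ∀ i ∈ S, w i = false := by
    intro i hi
    by_contra h
    simp only [suppSet, Finset.mem_filter] at hw
    exact Finset.disjoint_left.1 hRS (hw.2 i (by simpa using h)) hi
  by_cases hx : ∀ i ∈ S, bvXor v x i = false
  swap
  · simp [agree, hx]
  have hx' : agree S v x = 1 := by simp only [agree]; rw [if_pos hx]
  rw [hx', mul_one, one_mul]
  split_ifs with h
  · subst h
    have h1 : agree S v (bvXor x w) = 1 := by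
      simp only [agree]; rw [if_pos]
      intro i hi
      have := hx i hi
      simp only [bvXor] at this ⊢
      simpa [hw' i hi] using this
    have h2 : agree R (bvXor (bvXor x w) x) w = 1 := by
      simp only [agree]; rw [if_pos]
      intro i hi
      simp only [bvXor]
      cases x i <;> cases w i <;> rfl
    rw [h1, h2, one_mul]
  · simp only [agree]
    by_contra hne
    apply h
    have hy : ∀ i ∈ S, bvXor v y i = false := by
      by_contra hc; simp [hc] at hne
    have hr : ∀ i ∈ R, bvXor (bvXor y x) w i = false := by
      by_contra hc; simp [hc] at hne
    ext i
    have hi : i ∈ R ∪ S := by rw [hRScover]; exact Finset.mem_univ i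
    rcases Finset.mem_union.1 hi with hi | hi
    · have := hr i hi
      simp only [bvXor] at this ⊢
      revert this
      cases x i <;> cases y i <;> cases w i <;> simp
    · have h1 := hy i hi
      have h2 := hx i hi
      have h3 := hw' i hi
      simp only [bvXor] at h1 h2 ⊢
      rw [h3]
      revert h1 h2
      cases x i <;> cases y i <;> cases v i <;> simp

theorem rhs_matrix (X Z : Fin N → Matrix ι ι ℂ)
    (hZobs : ∀ i, IsBinaryObs (Z i))
    (hX : ∀ i j, Commute (X i) (X j)) (hZ : ∀ i j, Commute (Z i) (Z j))
    (R S : Finset (Fin N)) (hRS : Disjoint R S) (hRScover : R ∪ S = Finset.univ)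
    (u v : BV N) :
    ((2 : ℂ) ^ R.card)⁻¹ • ∑ u' ∈ suppSet R,
      (projObs Z hZ S v * obsProd Z hZ u' * projObs X hX R (bvXor u u')
              * obsProd Z hZ u' * projObs Z hZ S v)
    = ((2 : ℂ) ^ R.card)⁻¹ • ∑ w ∈ suppSet R, ∑ y, ∑ x,
        (bSign u w * (agree S v x * if y = bvXor x w then 1 else 0)) •
          (jointP Z hZ y * obsProd X hX w * jointP Z hZ x) := by
  congr 1
  have h1 : ∀ u', (projObs Z hZ S v * obsProd Z hZ u' * projObs X hX R (bvXor u u')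
              * obsProd Z hZ u' * projObs Z hZ S v)
      = ∑ w ∈ suppSet R, ∑ y, ∑ x, (((2 : ℂ) ^ R.card)⁻¹ * (agree S v y * bSign u' y) *
          (agree S v x * bSign u' x) * bSign (bvXor u u') w) •
          (jointP Z hZ y * obsProd X hX w * jointP Z hZ x) := by
    intro u'
    rw [mul_assoc _ (obsProd Z hZ u') (projObs Z hZ S v), left_proj Z hZobs,
      right_proj Z hZobs, projObs]
    simp only [Finset.smul_sum, Finset.mul_sum, Finset.sum_mul, smul_smul, Matrix.smul_mul,
      Matrix.mul_smul]
    rw [Finset.sum_comm]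
    refine Finset.sum_congr rfl fun w _ => ?_
    rw [Finset.sum_comm]
    refine Finset.sum_congr rfl fun y _ => Finset.sum_congr rfl fun x _ => ?_
    congr 1
    ring
  simp only [h1]
  rw [Finset.sum_comm]
  refine Finset.sum_congr rfl fun w hw => ?_
  rw [Finset.sum_comm]
  refine Finset.sum_congr rfl fun y _ => ?_
  rw [Finset.sum_comm]
  refine Finset.sum_congr rfl fun x _ => ?_
  rw [← Finset.sum_smul]
  congr 1
  rw [← agree_key R S hRS hRScover v x y w hw, ← agree_eq R]
  simp only [Finset.mul_sum]
  refine Finset.sum_congr rfl fun a _ => ?_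
  rw [bSign_comm (bvXor u a), bSign_comm (bvXor y x), bSign_xor, bSign_xor, bSign_comm w u,
    bSign_comm w a]
  ring

theorem phiPlus_apply (a b : BV N) :
    phiPlus N (a, b) = invSqrt2pow N * if a = b then 1 else 0 := by
  simp only [phiPlus, Pi.smul_apply, Finset.sum_apply, tensVec, eVec, smul_eq_mul]
  congr 1
  simp [eq_comm]

theorem extractedVec_apply (X Z : Fin N → Matrix ι ι ℂ)
    (hX : ∀ i j, Commute (X i) (X j)) (hZ : ∀ i j, Commute (Z i) (Z j))
    (ψ : ι → ℂ) (i : ι) (y x : BV N) :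
    extractedVec X Z hX hZ ψ (i, y, x)
      = invSqrt2pow N * ((obsProd X hX (bvXor y x) * jointP Z hZ x).mulVec ψ) i := by
  have h1 : ∀ r s, ((obsProd X hX r * obsProd Z hZ s) ⊗ₖ
      ((sigmaX r * sigmaZ s) ⊗ₖ (1 : QOp N))).mulVec (tensVec ψ (phiPlus N)) (i, y, x)
      = (if r = bvXor y x then 1 else 0) * (invSqrt2pow N * (bSign s x *
        ((obsProd X hX r * obsProd Z hZ s).mulVec ψ) i)) := by
    intro r s
    simp only [Matrix.mulVec, dotProduct, Fintype.sum_prod_type, Matrix.kroneckerMap_apply,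
      tensVec, phiPlus_apply, sigmaZ, Matrix.mul_diagonal, sigmaX, Matrix.of_apply,
      Matrix.one_apply, Finset.mul_sum]
    refine Finset.sum_congr rfl fun j _ => ?_
    rw [Finset.sum_eq_single x, Finset.sum_eq_single x]
    · simp only [bvXor_eq_iff y x r, if_true]; ring
    · intro b _ hb; simp [Ne.symm hb]
    · simp
    · intro b _ hb
      refine Finset.sum_eq_zero fun c _ => ?_
      by_cases hc : x = c
      · subst hc; simp [hb]
      · simp [hc]
    · simp
  simp only [extractedVec, Pi.smul_apply, Finset.sum_apply, h1]
  simp only [← Finset.mul_sum]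
  simp only [ite_mul, one_mul, zero_mul, Finset.sum_ite_eq', Finset.mem_univ,
    if_true, smul_eq_mul]
  rw [mul_left_comm]
  congr 1
  simp only [jointP, Matrix.mul_smul, Finset.mul_sum, Matrix.smul_mulVec, Matrix.sum_mulVec,
    Pi.smul_apply, Finset.sum_apply, smul_eq_mul]

theorem qInner_mulVec (A B : Matrix ι ι ℂ) (ψ : ι → ℂ) :
    qInner (A.mulVec ψ) (B.mulVec ψ) = qInner ψ ((Aᴴ * B).mulVec ψ) := by
  have h : ∀ f g : ι → ℂ, qInner f g = star f ⬝ᵥ g := fun f g => rfl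
  rw [h, h, Matrix.star_mulVec, ← Matrix.dotProduct_mulVec, Matrix.mulVec_mulVec]

theorem qInner_sum {κ : Type*} (T : Finset κ) (A : κ → Matrix ι ι ℂ) (ψ : ι → ℂ) :
    qInner ψ ((∑ k ∈ T, A k).mulVec ψ) = ∑ k ∈ T, qInner ψ ((A k).mulVec ψ) := by
  have h : ∀ f g : ι → ℂ, qInner f g = star f ⬝ᵥ g := fun f g => rfl
  simp only [h, Matrix.sum_mulVec, dotProduct_sum]

theorem qInner_smul (c : ℂ) (A : Matrix ι ι ℂ) (ψ : ι → ℂ) :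
    qInner ψ ((c • A).mulVec ψ) = c * qInner ψ (A.mulVec ψ) := by
  have h : ∀ f g : ι → ℂ, qInner f g = star f ⬝ᵥ g := fun f g => rfl
  simp only [h, Matrix.smul_mulVec, dotProduct_smul, smul_eq_mul]

theorem invSqrt_norm : (starRingEnd ℂ) (invSqrt2pow N) * invSqrt2pow N * (2 : ℂ) ^ N = 1 := by
  have h : (((Real.sqrt 2)⁻¹ : ℝ) : ℂ) * (((Real.sqrt 2)⁻¹ : ℝ) : ℂ) * 2 = 1 := by
    have : (Real.sqrt 2)⁻¹ * (Real.sqrt 2)⁻¹ * 2 = (1 : ℝ) := by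
      rw [← mul_inv, Real.mul_self_sqrt (by norm_num)]; norm_num
    exact_mod_cast this
  rw [invSqrt2pow, map_pow, Complex.conj_ofReal, ← mul_pow, ← mul_pow, h, one_pow]

theorem lhs_eq (X Z : Fin N → Matrix ι ι ℂ)
    (hXobs : ∀ i, IsBinaryObs (X i)) (hZobs : ∀ i, IsBinaryObs (Z i))
    (hX : ∀ i j, Commute (X i) (X j)) (hZ : ∀ i j, Commute (Z i) (Z j))
    (M : QOp N) (ψ : ι → ℂ) :
    qInner (extractedVec X Z hX hZ ψ)
        (((1 : Matrix ι ι ℂ) ⊗ₖ ((1 : QOp N) ⊗ₖ M)).mulVec (extractedVec X Z hX hZ ψ))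
      = ∑ x, ∑ x', M x x' *
        qInner ψ ((jointP Z hZ x * obsProd X hX (bvXor x x') * jointP Z hZ x').mulVec ψ) := by
  have h1 : ∀ i y x, (((1 : Matrix ι ι ℂ) ⊗ₖ ((1 : QOp N) ⊗ₖ M)).mulVec
      (extractedVec X Z hX hZ ψ)) (i, y, x)
      = ∑ x', M x x' * extractedVec X Z hX hZ ψ (i, y, x') := by
    intro i y x
    simp only [Matrix.mulVec, dotProduct, Fintype.sum_prod_type, Matrix.kroneckerMap_apply,
      Matrix.one_apply]
    rw [Finset.sum_eq_single i, Finset.sum_eq_single y]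
    · simp
    · intro b _ hb; simp [Ne.symm hb]
    · simp
    · intro b _ hb; simp [Ne.symm hb]
    · simp
  have h2 : ∀ y x x', qInner ((obsProd X hX (bvXor y x) * jointP Z hZ x).mulVec ψ)
      ((obsProd X hX (bvXor y x') * jointP Z hZ x').mulVec ψ)
      = qInner ψ ((jointP Z hZ x * obsProd X hX (bvXor x x') * jointP Z hZ x').mulVec ψ) := by
    intro y x x'
    rw [qInner_mulVec, Matrix.conjTranspose_mul, jointP_herm Z hZobs, obsProd_herm X hXobs,
      mul_assoc, ← mul_assoc (obsProd X hX (bvXor y x)), ← obsProd_xor X hXobs, ← mul_assoc,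
      bvXor_comm y x, bvXor_assoc, bvXor_cancel]
  have h3 : qInner (extractedVec X Z hX hZ ψ)
        (((1 : Matrix ι ι ℂ) ⊗ₖ ((1 : QOp N) ⊗ₖ M)).mulVec (extractedVec X Z hX hZ ψ))
      = ∑ y : BV N, ∑ x, ∑ x', (starRingEnd ℂ) (invSqrt2pow N) * invSqrt2pow N * (M x x' *
        qInner ((obsProd X hX (bvXor y x) * jointP Z hZ x).mulVec ψ)
      ((obsProd X hX (bvXor y x') * jointP Z hZ x').mulVec ψ)) := by
    conv_lhs => rw [qInner]
    simp only [Fintype.sum_prod_type, h1, extractedVec_apply, map_mul]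
    rw [Finset.sum_comm]
    refine Finset.sum_congr rfl fun y _ => ?_
    rw [Finset.sum_comm]
    refine Finset.sum_congr rfl fun x _ => ?_
    simp only [qInner, Finset.mul_sum]
    rw [Finset.sum_comm]
    refine Finset.sum_congr rfl fun x' _ => Finset.sum_congr rfl fun i _ => ?_
    ring
  rw [h3]
  simp only [h2, ← Finset.mul_sum, Finset.sum_const, Finset.card_univ]
  have hc : ((Fintype.card (BV N) : ℕ) : ℂ) = 2 ^ N := by simp
  rw [nsmul_eq_mul, hc, ← mul_assoc, invSqrt_norm, one_mul]

end obs

/-- measuring the Pauli observables `σx` on `R` and `σz` on `S` on the third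
register of the extracted vector `Φ` reproduces the protocol-observable distribution. -/
theorem extractedVec_measurement {N : ℕ} {ι : Type*} [Fintype ι] [DecidableEq ι]
    (X Z : Fin N → Matrix ι ι ℂ)
    (hXobs : ∀ i, IsBinaryObs (X i)) (hZobs : ∀ i, IsBinaryObs (Z i))
    (hX : ∀ i j, Commute (X i) (X j)) (hZ : ∀ i j, Commute (Z i) (Z j))
    (R S : Finset (Fin N)) (hRS : Disjoint R S) (hRScover : R ∪ S = Finset.univ)
    (ψ : ι → ℂ) (u v : BV N) (hu : u ∈ suppSet R) (hv : v ∈ suppSet S) :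
    qInner (extractedVec X Z hX hZ ψ)
        (((1 : Matrix ι ι ℂ) ⊗ₖ ((1 : QOp N) ⊗ₖ (projPauliX R u * projPauliZ S v))).mulVec
          (extractedVec X Z hX hZ ψ))
      = ((2 : ℂ) ^ R.card)⁻¹ * ∑ u' ∈ suppSet R,
          qInner ψ ((projObs Z hZ S v * obsProd Z hZ u' * projObs X hX R (bvXor u u')
              * obsProd Z hZ u' * projObs Z hZ S v).mulVec ψ) := by
  have hr : ((2 : ℂ) ^ R.card)⁻¹ * ∑ u' ∈ suppSet R,
          qInner ψ ((projObs Z hZ S v * obsProd Z hZ u' * projObs X hX R (bvXor u u')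
              * obsProd Z hZ u' * projObs Z hZ S v).mulVec ψ)
      = ((2 : ℂ) ^ R.card)⁻¹ * ∑ w ∈ suppSet R, ∑ y, ∑ x,
        (bSign u w * (agree S v x * if y = bvXor x w then 1 else 0)) *
          qInner ψ ((jointP Z hZ y * obsProd X hX w * jointP Z hZ x).mulVec ψ) := by
    rw [← qInner_sum, ← qInner_smul, rhs_matrix X Z hZobs hX hZ R S hRS hRScover, qInner_smul]
    simp only [qInner_sum, qInner_smul]
  rw [hr, lhs_eq X Z hXobs hZobs, projPauliZ_eq, Finset.sum_comm, Finset.mul_sum]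
  simp only [Matrix.mul_diagonal, projPauliX_apply, Finset.mul_sum, Finset.sum_mul]
  have e : ∀ f : BV N → BV N → BV N → ℂ, ∑ x, ∑ y, ∑ w ∈ suppSet R, f x y w
      = ∑ w ∈ suppSet R, ∑ y, ∑ x, f x y w := by
    intro f
    simp only [Finset.sum_comm (s := Finset.univ) (t := suppSet R)]
    exact Finset.sum_congr rfl fun w _ => Finset.sum_comm
  rw [e]
  refine Finset.sum_congr rfl fun w _ => Finset.sum_congr rfl fun y _ =>
    Finset.sum_congr rfl fun x _ => ?_
  by_cases h : y = bvXor x w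
  · subst h
    rw [bvXor_comm (bvXor x w) x, bvXor_cancel]
    ring
  · simp [h]

end
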